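/- Let b ≥ 2 be an integer and let Q = { 2 + 2πim/log b : m ∈ ℤ } ∪ {1} ∪ { 2 - k + 2πim/log b : m ∈ ℤ, k an even integer ≥ 2 }. There exists a function G : ℂ → ℂ such that: (i) G is analytic (complex differentiable) at every point of ℂ \ Q; (ii) G(s) = ∑_{n=1}^∞ S_b(n) n^{-s} for every s with Re(s) > 2; (iii) (s-2)² G(s) → (b-1)/(2 log b) as s → 2 (s ≠ 2), and ((s-2)² G(s) - (b-1)/(2 log b))/(s-2) → ((b-1)/(2 log b))(log(2π) - 1) - (b+1)/4 as s → 2; (iv) (s-1) G(s) → (b+1)/12 as s → 1 (s ≠ 1); (v) for every nonzero m ∈ ℤ, with p = 2 + 2πim/log b, (s-p) G(s) → -((b-1)/(2πim)) (1 + 2πim/log b)^{-1} ζ(2πim/log b) as s → p (s ≠ p); (vi) for every m ∈ ℤ and every even integer k ≥ 2, with p = 2 - k + 2πim/log b, (s-p) G(s) → ((b-1)/log b) ζ(2πim/log b) (B_k/(k·(k-2)!)) ∏_{j=1}^{k-2} (2πim/log b - j) as s → p (s ≠ p). -/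

import Mathlib

open Filter Topology

noncomputable section

/-- The base-`b` digit sum of `n`. -/
def digitSum (b n : ℕ) : ℕ := (Nat.digits b n).sum

/-- The cumulative base-`b` digit sum `S_b(n) = ∑_{m=1}^{n-1} d_b(m)`. -/
def cumDigitSum (b n : ℕ) : ℕ := ∑ m ∈ Finset.range n, digitSum b m

/-!
Put `c(n) = d_b(n) - d_b(n - 1)`. Since `c(n) = 1` when `b ∤ n` and `c(b * m) = c(m) - (b - 1)`, the
Dirichlet series of `c` is `D(s) = ζ(s) (b ^ s - b) / (b ^ s - 1)`, whose only poles are the points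
with `b ^ s = 1`. Summing a sequence twice multiplies its exponential sum by
`K(t) = 1 / (e ^ t + e ^ (-t) - 2)`, so `Γ(s) ∑ S_b(n) n ^ (-s)` is the Mellin transform of
`K(t) ∑ c(n) e ^ (-n t)`. Differentiating the generating function of the Bernoulli numbers gives
`K(t) ~ t ^ (-2) - ∑ B_{j + 2} / ((j + 2) j!) t ^ j` as `t → 0`. Because
`Γ(s + j) = s (s + 1) ⋯ (s + j - 1) Γ(s)`, the term in `t ^ j` contributes a polynomial multiple of
`D(s + j)`, and the term `t ^ (-2)` contributes `D(s - 2) / ((s - 1) (s - 2))`; the remainder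
`O(t ^ L)` contributes a function holomorphic for `2 - L < re s`. All poles can be read off from
these terms, and the odd `j` drop out because the odd Bernoulli numbers vanish.
-/

open Asymptotics Set

section Residue

/-- The function `f` has at most a simple pole at `p`, and its residue there is `r`. The case
`r = 0` is allowed and covers a removable singularity. -/
def HasResidueAt (f : ℂ → ℂ) (p r : ℂ) : Prop :=
  Tendsto (fun s => (s - p) * f s) (𝓝[≠] p) (𝓝 r)

variable {f g : ℂ → ℂ} {p r r' c : ℂ}

lemma HasResidueAt.of_continuousAt (hf : ContinuousAt f p) : HasResidueAt f p 0 := by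
  have h : ContinuousAt (fun s => (s - p) * f s) p := by fun_prop
  simpa [HasResidueAt, ContinuousAt] using h.tendsto.mono_left nhdsWithin_le_nhds

namespace HasResidueAt

lemma congr_nhds (hf : HasResidueAt f p r) (h : f =ᶠ[𝓝 p] g) : HasResidueAt g p r :=
  hf.congr' <| (h.filter_mono nhdsWithin_le_nhds).mono fun s hs => by rw [hs]

lemma add (hf : HasResidueAt f p r) (hg : HasResidueAt g p r') :
    HasResidueAt (fun s => f s + g s) p (r + r') := by
  simpa only [HasResidueAt, mul_add] using Tendsto.add hf hg

lemma sum {ι : Type*} {u : Finset ι} {F : ι → ℂ → ℂ} {R : ι → ℂ}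
    (h : ∀ i ∈ u, HasResidueAt (F i) p (R i)) :
    HasResidueAt (fun s => ∑ i ∈ u, F i s) p (∑ i ∈ u, R i) := by
  simpa only [HasResidueAt, Finset.mul_sum] using tendsto_finsetSum u h

lemma continuousAt_mul (hg : ContinuousAt g p) (hf : HasResidueAt f p r) :
    HasResidueAt (fun s => g s * f s) p (g p * r) := by
  have h := (hg.tendsto.mono_left nhdsWithin_le_nhds).mul hf
  simpa only [HasResidueAt, mul_left_comm] using h

lemma comp_add_const (hf : HasResidueAt f (p + c) r) : HasResidueAt (fun s => f (s + c)) p r := by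
  have h : Tendsto (fun s => s + c) (𝓝[≠] p) (𝓝[≠] (p + c)) :=
    tendsto_nhdsWithin_of_tendsto_nhds_of_eventually_within _
      ((continuous_add_const c).continuousAt.tendsto.mono_left nhdsWithin_le_nhds)
      (eventually_mem_nhdsWithin.mono fun s hs => by simpa using hs)
  simpa [HasResidueAt, Function.comp_def] using Tendsto.comp hf h

lemma inv_of_hasDerivAt {f' : ℂ} (hf : HasDerivAt f f' p) (hp : f p = 0) (hf' : f' ≠ 0) :
    HasResidueAt (fun s => (f s)⁻¹) p f'⁻¹ := by
  refine ((hasDerivAt_iff_tendsto_slope.1 hf).inv₀ hf').congr fun s => ?_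
  rw [slope_def_field, hp, sub_zero, inv_div, div_eq_mul_inv]

end HasResidueAt

/-- The function `f` has at most a double pole at `p`, with principal part
`a * (s - p)⁻² + r * (s - p)⁻¹`. -/
def HasDoublePoleAt (f : ℂ → ℂ) (p a r : ℂ) : Prop :=
  Tendsto (fun s => (s - p) ^ 2 * f s) (𝓝[≠] p) (𝓝 a) ∧
    Tendsto (fun s => ((s - p) ^ 2 * f s - a) / (s - p)) (𝓝[≠] p) (𝓝 r)

lemma HasDoublePoleAt.of_hasDerivAt (hg : HasDerivAt g r p)
    (h : ∀ᶠ s in 𝓝[≠] p, (s - p) ^ 2 * f s = g s) : HasDoublePoleAt f p (g p) r := by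
  refine ⟨(hg.continuousAt.tendsto.mono_left nhdsWithin_le_nhds).congr' (h.mono fun s => .symm),
    (hasDerivAt_iff_tendsto_slope.1 hg).congr' (h.mono fun s hs => ?_)⟩
  simp only [slope_def_field, hs]

end Residue

section AsymptoticSeries

open PowerSeries in
/-- The power series `P` is the (possibly divergent) asymptotic series of `f` at `0`: subtracting
the terms of degree `< n` leaves an error `O(t ^ n)`, for every `n`. -/
def HasAsymptoticSeries (f : ℝ → ℝ) (P : ℝ⟦X⟧) : Prop :=
  ∀ n : ℕ, (fun t => f t - (trunc n P).eval t) =O[𝓝 0] fun t => t ^ n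

namespace HasAsymptoticSeries

open PowerSeries

variable {f g : ℝ → ℝ} {P Q : ℝ⟦X⟧}

lemma isBigO_one (hf : HasAsymptoticSeries f P) : f =O[𝓝 0] fun _ => (1 : ℝ) := by
  simpa using hf 0

lemma add (hf : HasAsymptoticSeries f P) (hg : HasAsymptoticSeries g Q) :
    HasAsymptoticSeries (fun t => f t + g t) (P + Q) := fun n => by
  refine ((hf n).add (hg n)).congr_left fun t => ?_
  rw [map_add, Polynomial.eval_add]
  ring

lemma polynomial (p : Polynomial ℝ) : HasAsymptoticSeries (fun t => p.eval t) p := fun n => by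
  obtain ⟨q, hq⟩ : Polynomial.X ^ n ∣ p - trunc n (p : ℝ⟦X⟧) :=
    Polynomial.X_pow_dvd_iff.2 fun d hd => by simp [coeff_trunc, hd]
  have hq' : (fun t => q.eval t) =O[𝓝 0] fun _ => (1 : ℝ) :=
    q.continuous.continuousAt.norm.isBoundedUnder_le.isBigO_one ℝ
  refine ((isBigO_refl (fun t : ℝ => t ^ n) _).mul hq').congr (fun t => ?_) fun t => mul_one _
  rw [← Polynomial.eval_sub, hq, Polynomial.eval_mul, Polynomial.eval_pow, Polynomial.eval_X]

lemma mul (hf : HasAsymptoticSeries f P) (hg : HasAsymptoticSeries g Q) :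
    HasAsymptoticSeries (fun t => f t * g t) (P * Q) := fun n => by
  have hP : (fun t => f t * (g t - (trunc n Q).eval t)) =O[𝓝 0] fun t => t ^ n := by
    simpa using hf.isBigO_one.mul (hg n)
  have hQ : (fun t => (f t - (trunc n P).eval t) * (trunc n Q).eval t) =O[𝓝 0] fun t => t ^ n := by
    simpa using (hf n).mul (polynomial (trunc n Q)).isBigO_one
  have hPQ := polynomial (trunc n P * trunc n Q) n
  rw [Polynomial.coe_mul, trunc_trunc_mul_trunc] at hPQ
  refine ((hP.add hQ).add hPQ).congr_left fun t => ?_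
  simp only [Polynomial.eval_mul]
  ring

lemma comp_neg (hf : HasAsymptoticSeries f P) :
    HasAsymptoticSeries (fun t => f (-t)) (evalNegHom P) := fun n => by
  have h := (hf n).comp_tendsto (continuous_neg.tendsto' (0 : ℝ) 0 neg_zero)
  refine (h.congr_left fun t => ?_).trans (isBigO_of_le _ fun t => by simp)
  simp only [Function.comp_apply, Polynomial.eval, eval₂_trunc_eq_sum_range, evalNegHom,
    coeff_rescale, RingHom.id_apply]
  congr! 2 with i
  rw [neg_pow]
  ring

lemma exp : HasAsymptoticSeries Real.exp (PowerSeries.exp ℝ) := fun n => by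
  refine (Real.exp_sub_sum_range_isBigO_pow n).congr_left fun t => ?_
  simp [Polynomial.eval, eval₂_trunc_eq_sum_range, coeff_exp, div_eq_inv_mul]

end HasAsymptoticSeries

end AsymptoticSeries

section SummationKernel

/-- The kernel `1 / (e ^ t + e ^ (-t) - 2) = ∑ n * e ^ (-n * t)`. Multiplication by it turns the
exponential sum of a sequence into that of its double summatory function. -/
def summationKernel (t : ℝ) : ℝ := (Real.exp t + Real.exp (-t) - 2)⁻¹

/-- The coefficient of `t ^ j` in the asymptotic series of `summationKernel t - t⁻²` at `0`. -/
def kernelCoeff (j : ℕ) : ℝ := -(bernoulli (j + 2) / ((j + 2) * j.factorial))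

/-- The remainder `summationKernel t - t⁻² - ∑_{j < L} kernelCoeff j * t ^ j`. -/
def kernelRemainder (L : ℕ) (t : ℝ) : ℝ :=
  summationKernel t - (t ^ 2)⁻¹ - ∑ j ∈ Finset.range L, kernelCoeff j * t ^ j

lemma kernelCoeff_of_odd {j : ℕ} (hj : Odd j) : kernelCoeff j = 0 := by
  simp [kernelCoeff, bernoulli_eq_zero_of_odd (hj.add_even even_two) (by omega)]

lemma kernelRemainder_succ (L : ℕ) (t : ℝ) :
    kernelRemainder (L + 1) t = kernelRemainder L t - kernelCoeff L * t ^ L := by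
  rw [kernelRemainder, kernelRemainder, Finset.sum_range_succ]
  ring

lemma sq_le_exp_add_exp_neg_sub_two (t : ℝ) : t ^ 2 ≤ Real.exp t + Real.exp (-t) - 2 := by
  have hsinh : (t / 2) ^ 2 ≤ Real.sinh (t / 2) ^ 2 := by
    rw [sq_le_sq, Real.abs_sinh]
    exact Real.self_le_sinh_iff.2 (abs_nonneg _)
  have hcosh : Real.exp t + Real.exp (-t) = 2 * Real.cosh (2 * (t / 2)) := by
    rw [Real.cosh_eq, mul_div_cancel₀ t two_ne_zero]
    ring
  rw [hcosh, Real.cosh_two_mul, Real.cosh_sq]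
  linarith

lemma exp_add_exp_neg_sub_two_pos {t : ℝ} (ht : t ≠ 0) : 0 < Real.exp t + Real.exp (-t) - 2 :=
  (sq_pos_of_ne_zero ht).trans_le (sq_le_exp_add_exp_neg_sub_two t)

lemma summationKernel_nonneg (t : ℝ) : 0 ≤ summationKernel t :=
  inv_nonneg.2 ((sq_nonneg t).trans (sq_le_exp_add_exp_neg_sub_two t))

lemma summationKernel_le {t : ℝ} (ht : t ≠ 0) : summationKernel t ≤ (t ^ 2)⁻¹ :=
  inv_anti₀ (sq_pos_of_ne_zero ht) (sq_le_exp_add_exp_neg_sub_two t)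

lemma continuousOn_summationKernel : ContinuousOn summationKernel (Ioi 0) :=
  ContinuousOn.inv₀ (by fun_prop) fun _ ht => (exp_add_exp_neg_sub_two_pos (ne_of_gt ht)).ne'

lemma continuousOn_kernelRemainder (L : ℕ) : ContinuousOn (kernelRemainder L) (Ioi 0) := by
  have hpow : ContinuousOn (fun t : ℝ => (t ^ 2)⁻¹) (Ioi 0) :=
    ContinuousOn.inv₀ (by fun_prop) fun t ht => pow_ne_zero 2 (ne_of_gt ht)
  exact (continuousOn_summationKernel.sub hpow).sub (by fun_prop)

open PowerSeries in
/-- The asymptotic series of `t ^ 2 * summationKernel t` at `0`. Its `k`-th coefficient is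
`(1 - k) * bernoulli k / k!`. -/
def kernelSeries : ℝ⟦X⟧ := bernoulliPowerSeries ℝ - X * d⁄dX ℝ (bernoulliPowerSeries ℝ)

open PowerSeries in
lemma kernelSeries_mul_eq_X_sq :
    kernelSeries * (exp ℝ + evalNegHom (exp ℝ) - 2) = X ^ 2 := by
  rw [kernelSeries]
  set B := bernoulliPowerSeries ℝ
  set E := exp ℝ with hE
  set E' := evalNegHom E
  have hBE : B * (E - 1) = X := bernoulliPowerSeries_mul_exp_sub_one ℝ
  have hEE' : E * E' = 1 := exp_mul_exp_neg_eq_one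
  have hderiv : d⁄dX ℝ B * (E - 1) + B * E = 1 := by
    have := congrArg (d⁄dX ℝ) hBE
    simp only [Derivation.leibniz, map_sub, smul_eq_mul, derivative_X, hE, derivative_exp,
      Derivation.map_one_eq_zero, sub_zero] at this
    linear_combination this
  have hsq : E + E' - 2 = E' * (E - 1) ^ 2 := by linear_combination (2 - E) * hEE'
  rw [hsq]
  linear_combination (E' * (E - 1) + X * E * E') * hBE - X * E' * (E - 1) * hderiv + X ^ 2 * hEE'

open PowerSeries in
lemma eval_trunc_kernelSeries (L : ℕ) (t : ℝ) :
    (trunc (L + 2) kernelSeries).eval t =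
      1 + t ^ 2 * ∑ j ∈ Finset.range L, kernelCoeff j * t ^ j := by
  have hcoeff (j : ℕ) : coeff (j + 2) kernelSeries = kernelCoeff j := by
    have := j.factorial_ne_zero
    simp only [kernelSeries, map_sub, coeff_succ_X_mul, coeff_derivative, bernoulliPowerSeries,
      coeff_mk, kernelCoeff, Nat.factorial_succ, eq_ratCast, Rat.cast_div, Rat.cast_natCast]
    push_cast
    field_simp
    ring
  have hcoeff_one : coeff 1 kernelSeries = 0 := by
    rw [kernelSeries, map_sub, ← zero_add 1, coeff_succ_X_mul, coeff_derivative]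
    simp [bernoulliPowerSeries]
  have hcoeff_zero : coeff 0 kernelSeries = 1 := by
    simp [kernelSeries, bernoulliPowerSeries]
  rw [Polynomial.eval, eval₂_trunc_eq_sum_range, Finset.sum_range_succ', Finset.sum_range_succ']
  simp only [hcoeff, hcoeff_one, hcoeff_zero, zero_add, RingHom.id_apply, pow_zero, one_mul,
    zero_mul, add_zero, Finset.mul_sum]
  rw [add_comm]
  congr! 2
  ring

open PowerSeries in
lemma hasAsymptoticSeries_exp_add_exp_neg_sub_two :
    HasAsymptoticSeries (fun t => Real.exp t + Real.exp (-t) - 2)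
      (exp ℝ + evalNegHom (exp ℝ) - 2) := by
  have h := (HasAsymptoticSeries.exp.add HasAsymptoticSeries.exp.comp_neg).add
    (HasAsymptoticSeries.polynomial (Polynomial.C (-2)))
  simpa [sub_eq_add_neg, map_ofNat (C (R := ℝ)) 2] using h

open PowerSeries in
lemma kernelRemainder_mul_isBigO (L : ℕ) :
    (fun t => t ^ 2 * (Real.exp t + Real.exp (-t) - 2) * kernelRemainder (L + 1) t)
      =O[𝓝[>] 0] fun t => t ^ (L + 3) := by
  have hA := (HasAsymptoticSeries.polynomial (trunc (L + 3) kernelSeries)).mul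
    hasAsymptoticSeries_exp_add_exp_neg_sub_two (L + 3)
  have htrunc : trunc (L + 3) (X ^ 2 : ℝ⟦X⟧) = Polynomial.X ^ 2 := by
    rw [← Polynomial.coe_X, ← Polynomial.coe_pow]
    exact trunc_coe_eq_self (by simp)
  rw [trunc_trunc_mul, kernelSeries_mul_eq_X_sq, htrunc] at hA
  refine (hA.neg_left.mono nhdsWithin_le_nhds).congr' ?_ EventuallyEq.rfl
  filter_upwards [self_mem_nhdsWithin] with t (ht : 0 < t)
  have hq := (exp_add_exp_neg_sub_two_pos ht.ne').ne'
  rw [eval_trunc_kernelSeries, kernelRemainder, summationKernel, Polynomial.eval_pow,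
    Polynomial.eval_X]
  field_simp
  ring

lemma kernelRemainder_isBigO_zero (L : ℕ) :
    kernelRemainder L =O[𝓝[>] 0] fun t => t ^ L := by
  have hfar : kernelRemainder (L + 2) =O[𝓝[>] 0] fun t => t ^ L := by
    have h := (kernelRemainder_mul_isBigO (L + 1)).mul (isBigO_of_le (𝓝[>] 0)
      (f := fun t => (t ^ 2 * (Real.exp t + Real.exp (-t) - 2))⁻¹) (g := fun t : ℝ => (t ^ 4)⁻¹)
      fun t => ?_)
    · refine h.congr' ?_ ?_ <;> filter_upwards [self_mem_nhdsWithin] with t (ht : 0 < t)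
      · have hq := (exp_add_exp_neg_sub_two_pos ht.ne').ne'
        field_simp
      · field_simp
        ring
    · rcases eq_or_ne t 0 with rfl | ht
      · simp
      have hq := sq_le_exp_add_exp_neg_sub_two t
      rw [Real.norm_of_nonneg (by positivity [exp_add_exp_neg_sub_two_pos ht]),
        Real.norm_of_nonneg (by positivity), show t ^ 4 = t ^ 2 * t ^ 2 by ring]
      gcongr
  have hterm : (fun t => kernelCoeff L * t ^ L) =O[𝓝[>] 0] fun t : ℝ => t ^ L :=
    (isBigO_refl _ _).const_mul_left _
  have hterm' : (fun t => kernelCoeff (L + 1) * t ^ (L + 1)) =O[𝓝[>] 0] fun t : ℝ => t ^ L :=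
    ((isBigO_refl _ _).const_mul_left _).trans
      ((isLittleO_pow_pow L.lt_succ_self).isBigO.mono nhdsWithin_le_nhds)
  refine (hfar.add (hterm'.add hterm)).congr_left fun t => ?_
  rw [kernelRemainder_succ, kernelRemainder_succ]
  ring

lemma kernelRemainder_isBigO_atTop (L : ℕ) :
    kernelRemainder L =O[atTop] fun t => t ^ L := by
  have hsq : (fun t : ℝ => (t ^ 2)⁻¹) =O[atTop] fun t => t ^ L := by
    refine IsBigO.of_bound 1 ?_
    filter_upwards [eventually_ge_atTop 1] with t ht
    rw [Real.norm_of_nonneg (by positivity), Real.norm_of_nonneg (by positivity), one_mul]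
    exact (inv_le_one_of_one_le₀ (one_le_pow₀ ht)).trans (one_le_pow₀ ht)
  have hker : summationKernel =O[atTop] fun t => (t ^ 2)⁻¹ := by
    refine IsBigO.of_bound 1 ?_
    filter_upwards [eventually_ne_atTop 0] with t ht
    rw [Real.norm_of_nonneg (summationKernel_nonneg t), Real.norm_of_nonneg (by positivity),
      one_mul]
    exact summationKernel_le ht
  have hpoly : (fun t : ℝ => ∑ j ∈ Finset.range L, kernelCoeff j * t ^ j)
      =O[atTop] fun t => t ^ L :=
    IsBigO.fun_sum fun j hj => ((IsBigO.pow_of_le_right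
      (eventually_ge_atTop 1) (Finset.mem_range.1 hj).le).const_mul_left _)
  exact ((hker.trans hsq).sub hsq).sub hpoly

end SummationKernel

section MellinContinuation

/-- The function `D` is the Mellin transform of `C` divided by `Γ`, on `σ < re z`, where `C` is
continuous on `(0, ∞)`, decays rapidly at `∞` and is `O(t ^ (-σ))` at `0`. For
`C t = ∑ c n * e ^ (-n * t)` this makes `D` the Dirichlet series of `c`. -/
structure HasGammaMellin (C : ℝ → ℂ) (D : ℂ → ℂ) (σ : ℝ) : Prop where
  nonneg : 0 ≤ σ
  continuousOn : ContinuousOn C (Ioi 0)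
  isBigO_atTop : ∀ r : ℝ, C =O[atTop] (· ^ r)
  isBigO_zero : C =O[𝓝[>] 0] (· ^ (-σ))
  mellin_eq : ∀ {z : ℂ}, σ < z.re → mellin C z = Complex.Gamma z * D z

/-- The Mellin transform of `(summationKernel t - t⁻²) * C t` divided by `Γ`, with the first `L`
terms of the asymptotic series of the kernel evaluated in terms of `D`. It makes sense on
`σ - L < re s`. -/
def doubleSumTailApprox (C : ℝ → ℂ) (D : ℂ → ℂ) (L : ℕ) (s : ℂ) : ℂ :=
  ∑ j ∈ Finset.range L, kernelCoeff j * (ascPochhammer ℂ j).eval s * D (s + j) +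
    (Complex.Gamma s)⁻¹ * mellin (fun t => kernelRemainder L t * C t) s

/-- The continuation of all `doubleSumTailApprox C D L` to the whole plane. The number of terms is
chosen large enough for convergence at `s`, and the value does not depend on this choice. -/
def doubleSumTail (C : ℝ → ℂ) (D : ℂ → ℂ) (σ : ℝ) (s : ℂ) : ℂ :=
  doubleSumTailApprox C D (⌊σ - s.re⌋₊ + 1) s

/-- The continuation of the Mellin transform of `summationKernel t * C t` divided by `Γ`. -/
def doubleSumContinuation (C : ℝ → ℂ) (D : ℂ → ℂ) (σ : ℝ) (s : ℂ) : ℂ :=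
  ((s - 1) * (s - 2))⁻¹ * D (s - 2) + doubleSumTail C D σ s

lemma inv_Gamma_eq_ascPochhammer_mul (s : ℂ) (n : ℕ) :
    (Complex.Gamma s)⁻¹ = (ascPochhammer ℂ n).eval s * (Complex.Gamma (s + n))⁻¹ := by
  induction n with
  | zero => simp
  | succ n ih =>
    rw [ih, ascPochhammer_succ_eval,
      Complex.one_div_Gamma_eq_self_mul_one_div_Gamma_add_one (s + n)]
    push_cast
    ring_nf

namespace HasGammaMellin

variable {C : ℝ → ℂ} {D : ℂ → ℂ} {σ : ℝ} {s : ℂ} {L M : ℕ}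

lemma locallyIntegrableOn (h : HasGammaMellin C D σ) :
    MeasureTheory.LocallyIntegrableOn C (Ioi 0) :=
  h.continuousOn.locallyIntegrableOn measurableSet_Ioi

lemma mellinConvergent (h : HasGammaMellin C D σ) (hs : σ < s.re) : MellinConvergent C s :=
  mellinConvergent_of_isBigO_rpow h.locallyIntegrableOn (h.isBigO_atTop (-(s.re + 1)))
    (lt_add_one _) h.isBigO_zero hs

lemma kernelRemainder_mul_locallyIntegrableOn (h : HasGammaMellin C D σ) (L : ℕ) :
    MeasureTheory.LocallyIntegrableOn (fun t => kernelRemainder L t * C t) (Ioi 0) :=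
  ContinuousOn.locallyIntegrableOn ((Complex.continuous_ofReal.comp_continuousOn
    (continuousOn_kernelRemainder L)).mul h.continuousOn) measurableSet_Ioi

lemma kernelRemainder_mul_isBigO_atTop (h : HasGammaMellin C D σ) (L : ℕ) (r : ℝ) :
    (fun t => kernelRemainder L t * C t) =O[atTop] (· ^ r) := by
  have hK := (Complex.isBigO_ofReal_left.2 (kernelRemainder_isBigO_atTop L)).mul
    (h.isBigO_atTop (r - L))
  refine hK.congr' EventuallyEq.rfl ?_
  filter_upwards [eventually_gt_atTop 0] with t ht
  rw [← Real.rpow_natCast, ← Real.rpow_add ht, add_sub_cancel]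

lemma kernelRemainder_mul_isBigO_zero (h : HasGammaMellin C D σ) (L : ℕ) :
    (fun t => kernelRemainder L t * C t) =O[𝓝[>] 0] (· ^ (-(σ - L))) := by
  have hK := (Complex.isBigO_ofReal_left.2 (kernelRemainder_isBigO_zero L)).mul h.isBigO_zero
  refine hK.congr' EventuallyEq.rfl ?_
  filter_upwards [self_mem_nhdsWithin] with t ht
  rw [← Real.rpow_natCast, ← Real.rpow_add ht, neg_sub, sub_eq_add_neg]

lemma kernelRemainder_mul_mellinConvergent (h : HasGammaMellin C D σ) (hs : σ - L < s.re) :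
    MellinConvergent (fun t => kernelRemainder L t * C t) s :=
  mellinConvergent_of_isBigO_rpow (h.kernelRemainder_mul_locallyIntegrableOn L)
    (h.kernelRemainder_mul_isBigO_atTop L (-(s.re + 1))) (lt_add_one _)
    (h.kernelRemainder_mul_isBigO_zero L) hs

lemma kernelRemainder_mul_mellin_differentiableAt (h : HasGammaMellin C D σ)
    (hs : σ - L < s.re) :
    DifferentiableAt ℂ (mellin fun t => kernelRemainder L t * C t) s :=
  mellin_differentiableAt_of_isBigO_rpow (h.kernelRemainder_mul_locallyIntegrableOn L)
    (h.kernelRemainder_mul_isBigO_atTop L (-(s.re + 1))) (lt_add_one _)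
    (h.kernelRemainder_mul_isBigO_zero L) hs

lemma inv_Gamma_mul_mellin_cpow (h : HasGammaMellin C D σ) (n : ℕ) (hs : σ < (s + n).re) :
    (Complex.Gamma s)⁻¹ * mellin (fun t => (t : ℂ) ^ (n : ℂ) • C t) s =
      (ascPochhammer ℂ n).eval s * D (s + n) := by
  have hΓ := Complex.Gamma_ne_zero_of_re_pos (h.nonneg.trans_lt hs)
  rw [mellin_cpow_smul, h.mellin_eq hs, inv_Gamma_eq_ascPochhammer_mul s n]
  field_simp

lemma tailApprox_succ (h : HasGammaMellin C D σ) (hs : σ - L < s.re) :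
    doubleSumTailApprox C D (L + 1) s = doubleSumTailApprox C D L s := by
  have hsL : σ < (s + L).re := by simpa using sub_lt_iff_lt_add.1 hs
  have hterm : MellinConvergent (fun t => (kernelCoeff L : ℂ) • (t : ℂ) ^ (L : ℂ) • C t) s :=
    (MellinConvergent.cpow_smul.2 (h.mellinConvergent hsL)).const_smul _
  have hmellin := (hasMellin_sub (h.kernelRemainder_mul_mellinConvergent hs) hterm).2
  have hsplit : mellin (fun t => kernelRemainder (L + 1) t * C t) s =
      mellin (fun t => kernelRemainder L t * C t) s -
        kernelCoeff L • mellin (fun t => (t : ℂ) ^ (L : ℂ) • C t) s := by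
    rw [mellin_const_smul] at hmellin
    rw [Complex.real_smul, ← smul_eq_mul, ← hmellin]
    congr 1
    funext t
    rw [kernelRemainder_succ, Complex.cpow_natCast]
    push_cast
    simp only [smul_eq_mul]
    ring
  rw [doubleSumTailApprox, doubleSumTailApprox, Finset.sum_range_succ, hsplit, Complex.real_smul,
    mul_sub, mul_left_comm, h.inv_Gamma_mul_mellin_cpow L hsL]
  ring

lemma tailApprox_eq_of_le (h : HasGammaMellin C D σ) (hLM : L ≤ M) (hs : σ - L < s.re) :
    doubleSumTailApprox C D M s = doubleSumTailApprox C D L s := by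
  induction M, hLM using Nat.le_induction with
  | base => rfl
  | succ M hLM ih =>
    have : (L : ℝ) ≤ M := mod_cast hLM
    rw [h.tailApprox_succ (by linarith), ih]

lemma tail_eq_tailApprox (h : HasGammaMellin C D σ) (hs : σ - L < s.re) :
    doubleSumTail C D σ s = doubleSumTailApprox C D L s := by
  have hfloor : σ - (⌊σ - s.re⌋₊ + 1 : ℕ) < s.re := by
    push_cast
    linarith [Nat.lt_floor_add_one (σ - s.re)]
  rcases le_total L (⌊σ - s.re⌋₊ + 1) with hle | hle
  · exact h.tailApprox_eq_of_le hle hs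
  · exact (h.tailApprox_eq_of_le hle hfloor).symm

lemma tail_eventuallyEq_tailApprox (h : HasGammaMellin C D σ) (hs : σ - L < s.re) :
    doubleSumTail C D σ =ᶠ[𝓝 s] doubleSumTailApprox C D L := by
  filter_upwards [Complex.continuous_re.continuousAt.eventually_const_lt hs] with z hz
  exact h.tail_eq_tailApprox hz

lemma tail_differentiableAt (h : HasGammaMellin C D σ)
    (hD : ∀ j : ℕ, Even j → DifferentiableAt ℂ D (s + j)) :
    DifferentiableAt ℂ (doubleSumTail C D σ) s := by
  obtain ⟨L, hL⟩ := exists_nat_gt (σ - s.re)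
  have hs : σ - L < s.re := by linarith
  refine (h.tail_eventuallyEq_tailApprox hs).differentiableAt_iff.2 (.add (.fun_sum fun j _ => ?_)
    ((Complex.differentiable_one_div_Gamma s).mul
      (h.kernelRemainder_mul_mellin_differentiableAt hs)))
  rcases j.even_or_odd with hj | hj
  · exact (Polynomial.differentiable _ s).const_mul _ |>.mul <|
      (hD j hj).comp s (by fun_prop : DifferentiableAt ℂ (fun z => z + (j : ℂ)) s)
  · simp [kernelCoeff_of_odd hj]

lemma tail_hasResidueAt (h : HasGammaMellin C D σ) {r : ℂ} {k : ℕ}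
    (hk : HasResidueAt D (s + k) r)
    (hD : ∀ j : ℕ, j ≠ k → DifferentiableAt ℂ D (s + j)) :
    HasResidueAt (doubleSumTail C D σ) s (kernelCoeff k * (ascPochhammer ℂ k).eval s * r) := by
  obtain ⟨L, hL⟩ := exists_nat_gt (max (k : ℝ) (σ - s.re))
  have hs : σ - L < s.re := by linarith [le_max_right (k : ℝ) (σ - s.re)]
  have hkL : k < L := by exact_mod_cast (le_max_left _ _).trans_lt hL
  have hres (j : ℕ) : HasResidueAt D (s + j) (if j = k then r else 0) := by
    split_ifs with hj
    · exact hj ▸ hk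
    · exact .of_continuousAt (hD j hj).continuousAt
  have hcoeff (j : ℕ) :
      ContinuousAt (fun z => kernelCoeff j * (ascPochhammer ℂ j).eval z) s := by fun_prop
  have hrem := HasResidueAt.of_continuousAt ((Complex.differentiable_one_div_Gamma s).mul
      (h.kernelRemainder_mul_mellin_differentiableAt hs)).continuousAt
  have hsum := HasResidueAt.sum (u := Finset.range L) fun j _ =>
    (hres j).comp_add_const.continuousAt_mul (hcoeff j)
  have hval : ∑ j ∈ Finset.range L, kernelCoeff j * (ascPochhammer ℂ j).eval s *
      (if j = k then r else 0) = kernelCoeff k * (ascPochhammer ℂ k).eval s * r := by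
    simp [hkL]
  rw [← add_zero (_ * r), ← hval]
  exact (hsum.add hrem).congr_nhds (h.tail_eventuallyEq_tailApprox hs).symm

lemma mellin_summationKernel_mul (h : HasGammaMellin C D σ) (hs : σ + 2 < s.re) :
    mellin (fun t => summationKernel t * C t) s =
      Complex.Gamma s * doubleSumContinuation C D σ s := by
  have hσ := h.nonneg
  have hs2 : σ < (s + -2).re := by
    simp only [Complex.add_re, Complex.neg_re, Complex.re_ofNat]
    linarith
  have hs0 : σ - (0 : ℕ) < s.re := by
    push_cast
    linarith
  have hΓs : Complex.Gamma s ≠ 0 := Complex.Gamma_ne_zero_of_re_pos (by linarith)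
  have hΓ : Complex.Gamma (s - 2) = Complex.Gamma s * ((s - 1) * (s - 2))⁻¹ := by
    have := congrArg Inv.inv (inv_Gamma_eq_ascPochhammer_mul (s - 2) 2)
    rw [inv_inv, mul_inv, inv_inv, Nat.cast_two, sub_add_cancel] at this
    rw [this, ascPochhammer_succ_eval, ascPochhammer_one, Polynomial.eval_X, mul_comm]
    congr 2
    push_cast
    ring
  have hsplit : (fun t => summationKernel t * C t) = fun t : ℝ =>
      (t : ℂ) ^ (-2 : ℂ) • C t + kernelRemainder 0 t * C t := by
    funext t
    simp only [kernelRemainder, Finset.range_zero, Finset.sum_empty, sub_zero, Complex.cpow_neg,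
      Complex.cpow_ofNat, smul_eq_mul]
    push_cast
    ring
  rw [hsplit, (hasMellin_add (MellinConvergent.cpow_smul.2 (h.mellinConvergent hs2))
    (h.kernelRemainder_mul_mellinConvergent hs0)).2, mellin_cpow_smul, h.mellin_eq hs2,
    doubleSumContinuation, h.tail_eq_tailApprox hs0, doubleSumTailApprox, Finset.sum_range_zero,
    zero_add, mul_add, mul_inv_cancel_left₀ hΓs, ← sub_eq_add_neg, hΓ, mul_assoc]

end HasGammaMellin

end MellinContinuation

section ExponentialSum

/-- The exponential sum `∑ c n * e ^ (-n * t)`. -/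
def expSum (c : ℕ → ℂ) (t : ℝ) : ℂ := ∑' n : ℕ, c n * Real.exp (-n * t)

variable {c A B : ℕ → ℂ} {k l : ℕ} {t : ℝ}

lemma norm_mul_exp_le (hc : ∀ n, ‖c n‖ ≤ (n : ℝ) ^ k) (n : ℕ) (t : ℝ) :
    ‖c n * Real.exp (-n * t)‖ ≤ (n : ℝ) ^ k * Real.exp (-t * n) := by
  rw [norm_mul, Complex.norm_real, Real.norm_of_nonneg (Real.exp_pos _).le, neg_mul_comm,
    mul_comm (n : ℝ) (-t)]
  gcongr
  exact hc n

lemma summable_mul_exp (hc : ∀ n, ‖c n‖ ≤ (n : ℝ) ^ k) (ht : 0 < t) :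
    Summable fun n : ℕ => c n * Real.exp (-n * t) :=
  .of_norm_bounded (Real.summable_pow_mul_exp_neg_nat_mul k ht) fun n => norm_mul_exp_le hc n t

lemma continuousOn_expSum (hc : ∀ n, ‖c n‖ ≤ (n : ℝ) ^ k) :
    ContinuousOn (expSum c) (Ioi 0) := by
  refine continuousOn_of_forall_continuousAt fun t (ht : 0 < t) => ?_
  have h : ContinuousOn (expSum c) (Ioi (t / 2)) := by
    refine continuousOn_tsum (fun n => by fun_prop)
      (Real.summable_pow_mul_exp_neg_nat_mul k (half_pos ht)) fun n x hx => ?_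
    refine (norm_mul_exp_le hc n x).trans ?_
    have : t / 2 ≤ x := le_of_lt hx
    gcongr
  exact h.continuousAt (Ioi_mem_nhds (half_lt_self ht))

lemma hasSum_nat_mul_exp (ht : 0 < t) :
    HasSum (fun n : ℕ => n * Real.exp (-t * n)) (summationKernel t) := by
  have hlt : ‖Real.exp (-t)‖ < 1 := by
    rw [Real.norm_of_nonneg (Real.exp_pos _).le]
    exact Real.exp_lt_one_iff.2 (neg_neg_of_pos ht)
  have hval : summationKernel t = Real.exp (-t) / (1 - Real.exp (-t)) ^ 2 := by
    have hexp : Real.exp t * Real.exp (-t) = 1 := by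
      rw [← Real.exp_add, add_neg_cancel, Real.exp_zero]
    have hden : 1 - Real.exp (-t) ≠ 0 := by linarith [Real.exp_lt_one_iff.2 (neg_neg_of_pos ht)]
    rw [summationKernel, inv_eq_one_div,
      div_eq_div_iff (exp_add_exp_neg_sub_two_pos ht.ne').ne' (pow_ne_zero 2 hden)]
    linear_combination -hexp
  rw [hval]
  refine (hasSum_coe_mul_geometric_of_norm_lt_one hlt).congr_fun fun n => ?_
  rw [← Real.exp_nat_mul, mul_comm (-t)]

lemma norm_expSum_le_summationKernel (hc : ∀ n, ‖c n‖ ≤ n) (ht : 0 < t) :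
    ‖expSum c t‖ ≤ summationKernel t :=
  tsum_of_norm_bounded (hasSum_nat_mul_exp ht) fun n => by
    simpa using norm_mul_exp_le (k := 1) (by simpa using hc) n t

lemma summationKernel_le_exp (ht : 2 ≤ t) : summationKernel t ≤ 2 * Real.exp (-t) := by
  have hexp : 4 ≤ Real.exp t := by
    have := Real.quadratic_le_exp_of_nonneg (zero_le_two.trans ht)
    nlinarith
  calc summationKernel t ≤ (Real.exp t / 2)⁻¹ :=
        inv_anti₀ (by positivity) (by linarith [Real.exp_pos (-t)])
    _ = 2 * Real.exp (-t) := by rw [inv_div, Real.exp_neg, div_eq_mul_inv]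

lemma expSum_isBigO_atTop (hc : ∀ n, ‖c n‖ ≤ n) (r : ℝ) : expSum c =O[atTop] (· ^ r) := by
  have hexp : expSum c =O[atTop] fun t => Real.exp (-1 * t) := by
    refine .of_bound 2 ?_
    filter_upwards [eventually_ge_atTop 2] with t ht
    rw [Real.norm_of_nonneg (Real.exp_pos _).le, neg_one_mul]
    exact (norm_expSum_le_summationKernel hc (by linarith)).trans (summationKernel_le_exp ht)
  exact hexp.trans (isLittleO_exp_neg_mul_rpow_atTop one_pos r).isBigO

lemma expSum_isBigO_zero (hc : ∀ n, ‖c n‖ ≤ n) : expSum c =O[𝓝[>] 0] (· ^ (-2 : ℝ)) := by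
  refine .of_bound 1 ?_
  filter_upwards [self_mem_nhdsWithin] with t (ht : 0 < t)
  rw [Real.norm_of_nonneg (by positivity), one_mul, Real.rpow_neg ht.le, Real.rpow_two]
  exact (norm_expSum_le_summationKernel hc ht).trans (summationKernel_le ht.ne')

lemma hasSum_succ_mul_exp (hA : ∀ n, ‖A n‖ ≤ (n : ℝ) ^ k) (hA0 : A 0 = 0) (ht : 0 < t) :
    HasSum (fun n : ℕ => A (n + 1) * Real.exp (-n * t)) (Real.exp t * expSum A t) := by
  have h := (hasSum_nat_add_iff' 1).2 (summable_mul_exp hA ht).hasSum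
  rw [Finset.sum_range_one, hA0, zero_mul, sub_zero] at h
  refine (h.mul_left (Real.exp t : ℂ)).congr_fun fun n => ?_
  rw [mul_left_comm, ← Complex.ofReal_mul, ← Real.exp_add]
  congr 3
  push_cast
  ring

lemma expSum_comp_succ (hA : ∀ n, ‖A n‖ ≤ (n : ℝ) ^ k) (hA0 : A 0 = 0) (ht : 0 < t) :
    expSum (fun n => A (n + 1)) t = Real.exp t * expSum A t :=
  (hasSum_succ_mul_exp hA hA0 ht).tsum_eq

lemma expSum_sub_succ (hA : ∀ n, ‖A n‖ ≤ (n : ℝ) ^ k) (hA0 : A 0 = 0) (ht : 0 < t) :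
    expSum (fun n => A (n + 1) - A n) t = (Real.exp t - 1) * expSum A t := by
  have h : HasSum (fun n : ℕ => A (n + 1) * Real.exp (-n * t) - A n * Real.exp (-n * t))
      (Real.exp t * expSum A t - expSum A t) :=
    (hasSum_succ_mul_exp hA hA0 ht).sub (summable_mul_exp hA ht).hasSum
  rw [sub_mul, one_mul, ← h.tsum_eq]
  simp only [expSum, sub_mul]

lemma expSum_eq_summationKernel_mul (hA : ∀ n, ‖A n‖ ≤ (n : ℝ) ^ k) (hA0 : A 0 = 0)
    (hB : ∀ n, ‖B n‖ ≤ (n : ℝ) ^ l) (hB0 : B 0 = 0) (hc : ∀ n, ‖c n‖ ≤ n) (hc0 : c 0 = 0)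
    (hAB : ∀ n, A (n + 1) - A n = B n) (hBc : ∀ n, B (n + 1) - B n = c (n + 1)) (ht : 0 < t) :
    expSum A t = summationKernel t * expSum c t := by
  have hΔ : (Real.exp t - 1) * expSum A t = expSum B t := by
    rw [← expSum_sub_succ hA hA0 ht, funext hAB]
  have hΔΔ : (Real.exp t - 1) * expSum B t = Real.exp t * expSum c t := by
    rw [← expSum_sub_succ hB hB0 ht, funext hBc,
      expSum_comp_succ (k := 1) (by simpa using hc) hc0 ht]
  have hexp : (Real.exp t * Real.exp (-t) : ℂ) = 1 := by
    rw [← Complex.ofReal_mul, ← Real.exp_add, add_neg_cancel, Real.exp_zero, Complex.ofReal_one]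
  have hden : (Real.exp t + Real.exp (-t) - 2 : ℂ) ≠ 0 :=
    mod_cast (exp_add_exp_neg_sub_two_pos ht.ne').ne'
  rw [summationKernel]
  push_cast [← Complex.ofReal_exp]
  rw [inv_mul_eq_div, eq_div_iff hden]
  have hmul : (Real.exp t : ℂ) * (expSum A t * (Real.exp t + Real.exp (-t) - 2)) =
      Real.exp t * expSum c t := by
    linear_combination (Real.exp t - 1 : ℂ) * hΔ + hΔΔ + expSum A t * hexp
  exact mul_left_cancel₀ (mod_cast (Real.exp_pos t).ne') hmul

lemma mellin_expSum {s : ℂ} (hs : 0 < s.re) (hc0 : c 0 = 0)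
    (hc : ∀ n, ‖c n‖ ≤ (n : ℝ) ^ k) (hsum : LSeriesSummable c s) :
    mellin (expSum c) s = Complex.Gamma s * LSeries c s := by
  have hterm (n : ℕ) : LSeries.term c s n = c n / (n : ℝ) ^ s := by
    rw [LSeries.term_def₀ hc0, Complex.ofReal_natCast, Complex.cpow_neg, div_eq_mul_inv]
  have hp (n : ℕ) : c n = 0 ∨ 0 < (n : ℝ) := by
    rcases n.eq_zero_or_pos with rfl | hn
    · exact .inl hc0
    · exact .inr (mod_cast hn)
  have hnorm : Summable fun n : ℕ => ‖c n‖ / (n : ℝ) ^ s.re := by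
    refine hsum.norm.congr fun n => ?_
    rw [hterm, norm_div, Complex.norm_cpow_eq_rpow_re_of_nonneg n.cast_nonneg hs.ne']
  have h : HasSum (fun n : ℕ => Complex.Gamma s * c n / (n : ℝ) ^ s) (mellin (expSum c) s) :=
    hasSum_mellin hp hs (fun t ht => (summable_mul_exp hc ht).hasSum) hnorm
  rw [← h.tsum_eq, LSeries, ← tsum_mul_left]
  simp only [hterm, mul_div_assoc]

end ExponentialSum

section DigitSum

variable {b : ℕ}

lemma digitSum_add_mul (hb : 2 ≤ b) {r : ℕ} (hr : r < b) (q : ℕ) :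
    digitSum b (r + b * q) = r + digitSum b q := by
  by_cases h : r ≠ 0 ∨ q ≠ 0
  · simp [digitSum, Nat.digits_add b hb r q hr h]
  · obtain ⟨rfl, rfl⟩ : r = 0 ∧ q = 0 := by simpa using h
    simp [digitSum]

lemma digitSum_succ_of_not_dvd (hb : 2 ≤ b) {n : ℕ} (h : ¬b ∣ n + 1) :
    digitSum b (n + 1) = digitSum b n + 1 := by
  have hmod : (n + 1) % b ≠ 0 := mt Nat.dvd_of_mod_eq_zero h
  have hlt : (n + 1) % b < b := Nat.mod_lt _ (by lia)
  have hdiv := Nat.mod_add_div (n + 1) b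
  have hn : n = ((n + 1) % b - 1) + b * ((n + 1) / b) := by lia
  rw [← hdiv, digitSum_add_mul hb hlt]
  conv_rhs => rw [hn, digitSum_add_mul hb (by lia)]
  lia

/-- The backward difference of the base-`b` digit sum. At `n = 0` its value is `0`. -/
def digitSumDiff (b n : ℕ) : ℂ := digitSum b n - digitSum b (n - 1)

lemma digitSumDiff_zero : digitSumDiff b 0 = 0 := by simp [digitSumDiff]

lemma norm_digitSumDiff_le (n : ℕ) : ‖digitSumDiff b n‖ ≤ n := by
  have h : digitSum b n ≤ n := Nat.digit_sum_le b n
  have h' : digitSum b (n - 1) ≤ n := (Nat.digit_sum_le b (n - 1)).trans n.pred_le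
  have hcast : digitSumDiff b n = ((digitSum b n - digitSum b (n - 1) : ℝ) : ℂ) := by
    simp [digitSumDiff]
  rw [hcast, Complex.norm_real, Real.norm_eq_abs]
  exact abs_sub_le_of_nonneg_of_le (Nat.cast_nonneg _) (mod_cast h) (Nat.cast_nonneg _)
    (mod_cast h')

lemma digitSumDiff_mul (hb : 2 ≤ b) {m : ℕ} (hm : m ≠ 0) :
    digitSumDiff b (b * m) = digitSumDiff b m - (b - 1) := by
  obtain ⟨q, rfl⟩ := Nat.exists_eq_succ_of_ne_zero hm
  have hpred : b * (q + 1) - 1 = (b - 1) + b * q := by rw [mul_add_one]; lia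
  have hmul : digitSum b (b * (q + 1)) = digitSum b (q + 1) := by
    simpa using digitSum_add_mul hb (by lia : 0 < b) (q + 1)
  rw [digitSumDiff, digitSumDiff, Nat.succ_eq_add_one, hpred, hmul,
    digitSum_add_mul hb (by lia), Nat.add_sub_cancel]
  push_cast [Nat.cast_sub (by lia : 1 ≤ b)]
  ring

lemma digitSumDiff_eq (hb : 2 ≤ b) {n : ℕ} (hn : n ≠ 0) :
    digitSumDiff b n = 1 + if b ∣ n then digitSumDiff b (n / b) - b else 0 := by
  split_ifs with h
  · obtain ⟨m, rfl⟩ := h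
    rw [Nat.mul_div_cancel_left m (by lia), digitSumDiff_mul hb (right_ne_zero_of_mul hn)]
    ring
  · obtain ⟨k, rfl⟩ := Nat.exists_eq_succ_of_ne_zero hn
    rw [digitSumDiff, Nat.succ_eq_add_one, digitSum_succ_of_not_dvd hb h, Nat.add_sub_cancel]
    push_cast
    ring

lemma LSeriesHasSum_dilate {f : ℕ → ℂ} {s a : ℂ} (hb : b ≠ 0) (hf : LSeriesHasSum f s a) :
    LSeriesHasSum (fun n => if b ∣ n then f (n / b) else 0) s ((b : ℂ) ^ (-s) * a) := by
  refine ((mul_right_injective₀ hb).hasSum_iff fun n hn => ?_).1 ?_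
  · have : ¬b ∣ n := fun ⟨m, hm⟩ => hn ⟨m, hm.symm⟩
    simp [LSeries.term_def, this]
  · refine (hf.mul_left ((b : ℂ) ^ (-s))).congr_fun fun m => ?_
    rcases eq_or_ne m 0 with rfl | hm
    · simp
    · rw [Function.comp_apply, LSeries.term_of_ne_zero (mul_ne_zero hb hm),
        LSeries.term_of_ne_zero hm, if_pos (dvd_mul_right b m),
        Nat.mul_div_cancel_left m hb.bot_lt, Nat.cast_mul, Complex.natCast_mul_natCast_cpow,
        Complex.cpow_neg]
      field_simp

lemma LSeriesSummable_digitSumDiff {s : ℂ} (hs : 2 < s.re) : LSeriesSummable (digitSumDiff b) s :=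
  LSeriesSummable_of_le_const_mul_rpow (x := 2) hs
    ⟨1, fun n _ => (norm_digitSumDiff_le n).trans_eq (by norm_num)⟩

lemma LSeries_digitSumDiff_mul (hb : 2 ≤ b) {s : ℂ} (hs : 2 < s.re) :
    LSeries (digitSumDiff b) s * ((b : ℂ) ^ s - 1) = riemannZeta s * ((b : ℂ) ^ s - b) := by
  have hb0 : b ≠ 0 := by lia
  have hc := (LSeriesSummable_digitSumDiff (b := b) hs).LSeriesHasSum
  have hζ := LSeriesHasSum_one (by linarith : 1 < s.re)
  have h := hζ.add (LSeriesHasSum_dilate hb0 (hc.sub (hζ.smul (b : ℂ))))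
  have hvalue : LSeries (digitSumDiff b) s = riemannZeta s + (b : ℂ) ^ (-s) *
      (LSeries (digitSumDiff b) s - b * riemannZeta s) := by
    refine hc.unique ((LSeriesHasSum_congr s _ fun {n} hn => ?_).2 h)
    simpa using digitSumDiff_eq hb hn
  have hbs : (b : ℂ) ^ s ≠ 0 := by simp [Complex.cpow_eq_zero_iff, hb0]
  rw [Complex.cpow_neg] at hvalue
  field_simp at hvalue
  linear_combination hvalue

/-- The continuation of `ζ(s) (b ^ s - b)`. The pole of `ζ` at `1` cancels against the zero of
`b ^ s - b`. -/
def zetaMulCpowSub (b : ℕ) (s : ℂ) : ℂ := riemannZeta₁ s * dslope (fun z : ℂ => (b : ℂ) ^ z) 1 s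

/-- The continuation of the Dirichlet series of `digitSumDiff b`. -/
def digitSumDiffLSeries (b : ℕ) (s : ℂ) : ℂ := zetaMulCpowSub b s / ((b : ℂ) ^ s - 1)

lemma zetaMulCpowSub_of_ne_one {s : ℂ} (hs : s ≠ 1) :
    zetaMulCpowSub b s = riemannZeta s * ((b : ℂ) ^ s - b) := by
  have : s - 1 ≠ 0 := sub_ne_zero.2 hs
  rw [zetaMulCpowSub, dslope_of_ne _ hs, slope_def_field, riemannZeta_eq_inv_sub_mul hs,
    Complex.cpow_one]
  field_simp

lemma hasDerivAt_natCast_cpow (hb : b ≠ 0) (s : ℂ) :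
    HasDerivAt (fun z : ℂ => (b : ℂ) ^ z) ((b : ℂ) ^ s * Real.log b) s := by
  simpa [Complex.natCast_log] using
    (hasDerivAt_id s).const_cpow (c := (b : ℂ)) (.inl (Nat.cast_ne_zero.2 hb))

lemma differentiable_zetaMulCpowSub (hb : b ≠ 0) : Differentiable ℂ (zetaMulCpowSub b) := by
  refine differentiable_riemannZeta₁.mul ?_
  rw [← differentiableOn_univ, Complex.differentiableOn_dslope univ_mem]
  exact fun z _ => (hasDerivAt_natCast_cpow hb z).differentiableAt.differentiableWithinAt

lemma differentiableAt_digitSumDiffLSeries (hb : b ≠ 0) {s : ℂ} (hs : (b : ℂ) ^ s ≠ 1) :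
    DifferentiableAt ℂ (digitSumDiffLSeries b) s :=
  (differentiable_zetaMulCpowSub hb s).div
    ((hasDerivAt_natCast_cpow hb s).differentiableAt.sub_const 1) (sub_ne_zero.2 hs)

lemma log_natCast_ne_zero (hb : 2 ≤ b) : (Real.log b : ℂ) ≠ 0 :=
  mod_cast (Real.log_pos (mod_cast hb)).ne'

lemma natCast_cpow_eq_one_iff (hb : 2 ≤ b) {s : ℂ} :
    (b : ℂ) ^ s = 1 ↔ ∃ m : ℤ, s = 2 * Real.pi * Complex.I * m / Real.log b := by
  have hlog := log_natCast_ne_zero hb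
  rw [Complex.cpow_def_of_ne_zero (mod_cast (by lia : b ≠ 0)), ← Complex.natCast_log,
    Complex.exp_eq_one_iff]
  refine exists_congr fun m => ?_
  rw [eq_div_iff hlog, mul_comm s, mul_comm (m : ℂ)]

lemma re_eq_zero_of_natCast_cpow_eq_one (hb : 2 ≤ b) {s : ℂ} (hs : (b : ℂ) ^ s = 1) :
    s.re = 0 := by
  obtain ⟨m, rfl⟩ := (natCast_cpow_eq_one_iff hb).1 hs
  rw [Complex.div_ofReal_re]
  simp

lemma natCast_cpow_ne_one (hb : 2 ≤ b) {s : ℂ} (hs : s.re ≠ 0) : (b : ℂ) ^ s ≠ 1 :=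
  mt (re_eq_zero_of_natCast_cpow_eq_one hb) hs

lemma LSeries_digitSumDiff (hb : 2 ≤ b) {s : ℂ} (hs : 2 < s.re) :
    LSeries (digitSumDiff b) s = digitSumDiffLSeries b s := by
  have hs1 : s ≠ 1 := by
    rintro rfl
    norm_num at hs
  have hbs : (b : ℂ) ^ s ≠ 1 := natCast_cpow_ne_one hb (by linarith)
  rw [digitSumDiffLSeries, zetaMulCpowSub_of_ne_one hs1, eq_div_iff (sub_ne_zero.2 hbs)]
  exact LSeries_digitSumDiff_mul hb hs

lemma hasGammaMellin_digitSumDiff (hb : 2 ≤ b) :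
    HasGammaMellin (expSum (digitSumDiff b)) (digitSumDiffLSeries b) 2 where
  nonneg := zero_le_two
  continuousOn := continuousOn_expSum (k := 1) (by simpa using norm_digitSumDiff_le)
  isBigO_atTop := expSum_isBigO_atTop norm_digitSumDiff_le
  isBigO_zero := expSum_isBigO_zero norm_digitSumDiff_le
  mellin_eq {s} hs := by
    rw [← LSeries_digitSumDiff hb hs]
    exact mellin_expSum (k := 1) (by linarith) digitSumDiff_zero
      (by simpa using norm_digitSumDiff_le) (LSeriesSummable_digitSumDiff hs)

end DigitSum

section CumDigitSum

variable {b : ℕ}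

lemma cumDigitSum_succ (n : ℕ) : cumDigitSum b (n + 1) = cumDigitSum b n + digitSum b n :=
  Finset.sum_range_succ _ _

lemma cumDigitSum_le_mul {n d : ℕ} (h : ∀ m < n, digitSum b m ≤ d) :
    cumDigitSum b n ≤ n * d := by
  have hsum := Finset.sum_le_card_nsmul _ _ d fun m hm => h m (Finset.mem_range.1 hm)
  rwa [Finset.card_range, smul_eq_mul] at hsum

lemma cumDigitSum_le_sq (n : ℕ) : cumDigitSum b n ≤ n ^ 2 :=
  (cumDigitSum_le_mul fun m hm => (Nat.digit_sum_le b m).trans hm.le).trans_eq (sq n).symm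

lemma digitSum_le_mul_log (hb : 2 ≤ b) (n : ℕ) : digitSum b n ≤ (Nat.log b n + 1) * b := by
  rcases eq_or_ne n 0 with rfl | hn
  · simp [digitSum]
  · rw [← Nat.length_digits b n hb hn]
    exact List.sum_le_card_nsmul _ b fun x hx => (Nat.digits_lt_base hb hx).le

lemma cumDigitSum_le_mul_log (hb : 2 ≤ b) (n : ℕ) :
    cumDigitSum b n ≤ n * ((Nat.log b n + 1) * b) :=
  cumDigitSum_le_mul fun m hm => (digitSum_le_mul_log hb m).trans (by gcongr)

lemma cumDigitSum_isBigO (hb : 2 ≤ b) {ε : ℝ} (hε : 0 < ε) :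
    (fun n => (cumDigitSum b n : ℂ)) =O[atTop] fun n : ℕ => (n : ℝ) ^ (1 + ε) := by
  have hlog : (fun x : ℝ => (Real.log x / Real.log b + 1) * b) =O[atTop] (· ^ ε) := by
    have h := isLittleO_log_rpow_atTop hε
    have h' := (h.isBigO.const_mul_left (Real.log b)⁻¹).add
      ((Real.isLittleO_const_log_atTop (c := 1)).trans h).isBigO
    refine (h'.const_mul_left (b : ℝ)).congr_left fun x => ?_
    ring
  have hmul : (fun n : ℕ => (n * ((Real.log n / Real.log b + 1) * b) : ℝ)) =O[atTop]
      fun n : ℕ => (n : ℝ) ^ (1 + ε) := by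
    refine ((isBigO_refl (fun n : ℕ => (n : ℝ)) atTop).mul
      (hlog.comp_tendsto tendsto_natCast_atTop_atTop)).congr' .rfl ?_
    filter_upwards [eventually_gt_atTop 0] with n hn
    rw [Real.rpow_add (mod_cast hn), Real.rpow_one]
    rfl
  refine .trans (.of_norm_le fun n => ?_) hmul
  rw [Complex.norm_natCast]
  calc (cumDigitSum b n : ℝ) ≤ n * ((Nat.log b n + 1) * b) := mod_cast cumDigitSum_le_mul_log hb n
    _ ≤ n * ((Real.log n / Real.log b + 1) * b) := by
      gcongr
      exact Real.natLog_le_logb n b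

lemma abscissaOfAbsConv_cumDigitSum_le (hb : 2 ≤ b) :
    LSeries.abscissaOfAbsConv (fun n => (cumDigitSum b n : ℂ)) ≤ 2 := by
  refine EReal.le_of_forall_lt_iff_le.1 fun x hx => ?_
  have hx' : (2 : ℝ) < x := EReal.coe_lt_coe_iff.1 hx
  have h := LSeries.abscissaOfAbsConv_le_of_isBigO_rpow
    (cumDigitSum_isBigO hb (sub_pos.2 hx'))
  refine h.trans_eq ?_
  norm_cast
  ring

lemma abscissaOfAbsConv_cumDigitSum_lt (hb : 2 ≤ b) {s : ℂ} (hs : 2 < s.re) :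
    LSeries.abscissaOfAbsConv (fun n => (cumDigitSum b n : ℂ)) < s.re :=
  (abscissaOfAbsConv_cumDigitSum_le hb).trans_lt (EReal.coe_lt_coe_iff.2 hs : (2 : EReal) < s.re)

lemma LSeries_cumDigitSum_eq_tsum (hb : 2 ≤ b) {s : ℂ} (hs : 2 < s.re) :
    LSeries (fun n => (cumDigitSum b n : ℂ)) s =
      ∑' n : ℕ, (cumDigitSum b (n + 1) : ℂ) * ((n + 1 : ℕ) : ℂ) ^ (-s) := by
  have hsum := LSeriesSummable_of_abscissaOfAbsConv_lt_re (abscissaOfAbsConv_cumDigitSum_lt hb hs)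
  rw [LSeries, hsum.tsum_eq_zero_add, LSeries.term_zero, zero_add]
  refine tsum_congr fun n => ?_
  rw [LSeries.term_of_ne_zero n.succ_ne_zero, Complex.cpow_neg, div_eq_mul_inv]

lemma expSum_cumDigitSum {t : ℝ} (ht : 0 < t) :
    expSum (fun n => (cumDigitSum b n : ℂ)) t =
      summationKernel t * expSum (digitSumDiff b) t := by
  refine expSum_eq_summationKernel_mul (B := fun n => (digitSum b n : ℂ)) (k := 2) (l := 1)
    (fun n => ?_) (by simp [cumDigitSum]) (fun n => ?_) (by simp [digitSum])
    norm_digitSumDiff_le digitSumDiff_zero (fun n => ?_) (fun n => rfl) ht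
  · rw [Complex.norm_natCast]
    exact_mod_cast cumDigitSum_le_sq n
  · rw [Complex.norm_natCast, pow_one]
    exact_mod_cast Nat.digit_sum_le b n
  · rw [cumDigitSum_succ]
    push_cast
    ring

/-- The continuation of the Dirichlet series of `cumDigitSum b` to the whole plane. -/
def cumDigitSumLSeries (b : ℕ) : ℂ → ℂ :=
  doubleSumContinuation (expSum (digitSumDiff b)) (digitSumDiffLSeries b) 2

lemma differentiableAt_cumDigitSumLSeries (hb : 2 ≤ b) {s : ℂ} (h1 : s ≠ 1)
    (h : (b : ℂ) ^ (s - 2) ≠ 1) (hj : ∀ j : ℕ, Even j → (b : ℂ) ^ (s + j) ≠ 1) :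
    DifferentiableAt ℂ (cumDigitSumLSeries b) s := by
  have hb0 : b ≠ 0 := by lia
  have h2 : s ≠ 2 := by
    rintro rfl
    simp at h
  have hmain : DifferentiableAt ℂ
      (fun s => ((s - 1) * (s - 2))⁻¹ * digitSumDiffLSeries b (s - 2)) s := by
    refine .mul (.inv (by fun_prop) (mul_ne_zero (sub_ne_zero.2 h1) (sub_ne_zero.2 h2))) ?_
    exact (differentiableAt_digitSumDiffLSeries hb0 h).comp (f := fun s => s - 2) s (by fun_prop)
  exact hmain.add ((hasGammaMellin_digitSumDiff hb).tail_differentiableAt fun j hjEven =>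
    differentiableAt_digitSumDiffLSeries hb0 (hj j hjEven))

lemma differentiableAt_cumDigitSumLSeries_of_two_lt_re (hb : 2 ≤ b) {s : ℂ} (hs : 2 < s.re) :
    DifferentiableAt ℂ (cumDigitSumLSeries b) s := by
  refine differentiableAt_cumDigitSumLSeries hb ?_ (natCast_cpow_ne_one hb ?_)
    fun j _ => natCast_cpow_ne_one hb ?_
  · rintro rfl
    norm_num at hs
  · simpa using (sub_pos.2 hs).ne'
  · rw [Complex.add_re, Complex.natCast_re]
    positivity

lemma cumDigitSumLSeries_eq_LSeries_of_four_lt_re (hb : 2 ≤ b) {s : ℂ} (hs : 4 < s.re) :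
    cumDigitSumLSeries b s = LSeries (fun n => (cumDigitSum b n : ℂ)) s := by
  have hGamma : Complex.Gamma s ≠ 0 := Complex.Gamma_ne_zero_of_re_pos (by linarith)
  refine mul_left_cancel₀ hGamma ?_
  rw [← mellin_expSum (k := 2) (by linarith) (by simp [cumDigitSum]) (fun n => ?_)
    (LSeriesSummable_of_abscissaOfAbsConv_lt_re
      (abscissaOfAbsConv_cumDigitSum_lt hb (by linarith))), cumDigitSumLSeries,
    ← (hasGammaMellin_digitSumDiff hb).mellin_summationKernel_mul (by linarith)]
  · refine MeasureTheory.setIntegral_congr_fun measurableSet_Ioi fun t ht => ?_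
    simp only [expSum_cumDigitSum (b := b) ht]
  · rw [Complex.norm_natCast]
    exact_mod_cast cumDigitSum_le_sq n

lemma cumDigitSumLSeries_eq_LSeries (hb : 2 ≤ b) {s : ℂ} (hs : 2 < s.re) :
    cumDigitSumLSeries b s = LSeries (fun n => (cumDigitSum b n : ℂ)) s := by
  set U : Set ℂ := {s : ℂ | 2 < s.re}
  have hU : IsOpen U := isOpen_lt continuous_const Complex.continuous_re
  have hG : AnalyticOnNhd ℂ (cumDigitSumLSeries b) U :=
    DifferentiableOn.analyticOnNhd (fun z hz =>
      (differentiableAt_cumDigitSumLSeries_of_two_lt_re hb hz).differentiableWithinAt) hU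
  have hL : AnalyticOnNhd ℂ (LSeries fun n => (cumDigitSum b n : ℂ)) U :=
    (LSeries_analyticOnNhd _).mono fun z hz => abscissaOfAbsConv_cumDigitSum_lt hb hz
  have h5 : (5 : ℂ) ∈ U := by norm_num [U]
  have hnear : cumDigitSumLSeries b =ᶠ[𝓝 5] LSeries fun n => (cumDigitSum b n : ℂ) := by
    filter_upwards [(isOpen_lt continuous_const Complex.continuous_re).mem_nhds
      (by norm_num : (4 : ℝ) < (5 : ℂ).re)] with z hz
    exact cumDigitSumLSeries_eq_LSeries_of_four_lt_re hb hz
  exact hG.eqOn_of_preconnected_of_eventuallyEq hL (convex_halfSpace_re_gt 2).isPreconnected h5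
    hnear hs

end CumDigitSum

section Poles

variable {b : ℕ} {w : ℂ}

lemma hasDerivAt_dslope_self {f : ℂ → ℂ} {a : ℂ} (hf : AnalyticAt ℂ f a) :
    HasDerivAt (dslope f a) (deriv (deriv f) a / 2) a :=
  hf.hasFPowerSeriesAt.has_fpower_series_dslope_fslope.hasDerivAt.congr_deriv
    (by simp [iteratedDeriv_succ])

lemma ascPochhammer_eval_sub_natCast (w : ℂ) (j : ℕ) :
    (ascPochhammer ℂ j).eval (w - j) = ∏ i ∈ Finset.Icc 1 j, (w - i) := by
  have h := descPochhammer_eval_eq_ascPochhammer ℂ (w - 1) j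
  rw [show w - 1 - j + 1 = w - j by ring, descPochhammer_eval_eq_prod_range] at h
  rw [← h, ← Finset.Ico_succ_right_eq_Icc, Finset.prod_Ico_eq_prod_range]
  refine Finset.prod_congr rfl fun i _ => ?_
  push_cast
  ring

lemma hasResidueAt_digitSumDiffLSeries (hb : 2 ≤ b) (hw : (b : ℂ) ^ w = 1) :
    HasResidueAt (digitSumDiffLSeries b) w (riemannZeta w * (1 - b) / Real.log b) := by
  have hb0 : b ≠ 0 := by lia
  have hw1 : w ≠ 1 := by
    rintro rfl
    simpa using re_eq_zero_of_natCast_cpow_eq_one hb hw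
  have hinv := HasResidueAt.inv_of_hasDerivAt ((hasDerivAt_natCast_cpow hb0 w).sub_const 1)
    (sub_eq_zero.2 hw) (by simpa [hw] using log_natCast_ne_zero hb)
  have h := hinv.continuousAt_mul (differentiable_zetaMulCpowSub hb0 w).continuousAt
  rwa [zetaMulCpowSub_of_ne_one hw1, hw, one_mul] at h

lemma digitSumDiffLSeries_neg_one (hb : 2 ≤ b) : digitSumDiffLSeries b (-1) = -(b + 1) / 12 := by
  have hb0 : (b : ℂ) ≠ 0 := mod_cast (by lia : b ≠ 0)
  have hb1 : (1 : ℂ) - b ≠ 0 := sub_ne_zero.2 (mod_cast (by lia : 1 ≠ b))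
  have hζ : riemannZeta (-1) = -1 / 12 := by
    have h := riemannZeta_neg_nat_eq_bernoulli 1
    norm_num [bernoulli_two] at h ⊢
    exact h
  rw [digitSumDiffLSeries, zetaMulCpowSub_of_ne_one (by norm_num), hζ, Complex.cpow_neg_one]
  have : (b : ℂ)⁻¹ - 1 ≠ 0 := by
    rw [← one_div, div_sub_one hb0]
    exact div_ne_zero hb1 hb0
  rw [div_eq_iff this]
  field_simp
  ring

lemma differentiableAt_doubleSumTail (hb : 2 ≤ b) {s : ℂ}
    (hs : ∀ j : ℕ, Even j → s.re + j ≠ 0) :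
    DifferentiableAt ℂ (doubleSumTail (expSum (digitSumDiff b)) (digitSumDiffLSeries b) 2) s :=
  (hasGammaMellin_digitSumDiff hb).tail_differentiableAt fun j hj =>
    differentiableAt_digitSumDiffLSeries (by lia) (natCast_cpow_ne_one hb (by simpa using hs j hj))

lemma differentiableAt_digitSumDiffLSeries_sub_two (hb : 2 ≤ b) {p : ℂ} (hp : p.re ≠ 2) :
    DifferentiableAt ℂ (fun s => digitSumDiffLSeries b (s - 2)) p := by
  refine DifferentiableAt.comp (f := fun s => s - 2) p
    (differentiableAt_digitSumDiffLSeries (by lia) (natCast_cpow_ne_one hb ?_)) (by fun_prop)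
  simpa [sub_eq_zero] using hp

lemma hasResidueAt_cumDigitSumLSeries_one (hb : 2 ≤ b) :
    HasResidueAt (cumDigitSumLSeries b) 1 ((b + 1) / 12) := by
  have hmain : ContinuousAt (fun s : ℂ => (s - 2)⁻¹ * digitSumDiffLSeries b (s - 2)) 1 :=
    .mul (ContinuousAt.inv₀ (by fun_prop) (by norm_num))
      (differentiableAt_digitSumDiffLSeries_sub_two hb (by norm_num)).continuousAt
  have hinv : HasResidueAt (fun s : ℂ => (s - 1)⁻¹) 1 1⁻¹ :=
    .inv_of_hasDerivAt ((hasDerivAt_id 1).sub_const 1) (sub_self 1) one_ne_zero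
  have htail := differentiableAt_doubleSumTail (b := b) (s := 1) hb fun j _ => by
    rw [Complex.one_re]
    positivity
  convert (hinv.continuousAt_mul hmain).add (.of_continuousAt htail.continuousAt) using 1
  · funext s
    rw [cumDigitSumLSeries, doubleSumContinuation, mul_inv]
    ring
  · rw [show (1 : ℂ) - 2 = -1 by norm_num, digitSumDiffLSeries_neg_one hb]
    ring

lemma hasResidueAt_cumDigitSumLSeries_two_add (hb : 2 ≤ b) (hw : (b : ℂ) ^ w = 1) (hw0 : w ≠ 0) :
    HasResidueAt (cumDigitSumLSeries b) (2 + w)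
      (((1 + w) * w)⁻¹ * (riemannZeta w * (1 - b) / Real.log b)) := by
  have hre := re_eq_zero_of_natCast_cpow_eq_one hb hw
  have h1w : 1 + w ≠ 0 := fun h => by simpa [hre] using congrArg Complex.re h
  have hD : HasResidueAt (digitSumDiffLSeries b) (2 + w + -2)
      (riemannZeta w * (1 - b) / Real.log b) := by
    convert hasResidueAt_digitSumDiffLSeries hb hw using 1
    ring
  have htail := differentiableAt_doubleSumTail (b := b) (s := 2 + w) hb fun j _ => by
    rw [Complex.add_re, hre, Complex.re_ofNat]
    positivity
  have hne : (2 + w - 1) * (2 + w - 2) = (1 + w) * w := by ring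
  have hcoeff : ContinuousAt (fun s : ℂ => ((s - 1) * (s - 2))⁻¹) (2 + w) :=
    .inv₀ (by fun_prop) (hne ▸ mul_ne_zero h1w hw0)
  have h := (hD.comp_add_const.continuousAt_mul hcoeff).add (.of_continuousAt htail.continuousAt)
  rw [add_zero, hne] at h
  exact h

lemma hasResidueAt_cumDigitSumLSeries_sub_natCast (hb : 2 ≤ b) (hw : (b : ℂ) ^ w = 1) (j : ℕ) :
    HasResidueAt (cumDigitSumLSeries b) (w - j)
      (kernelCoeff j * (∏ i ∈ Finset.Icc 1 j, (w - i)) *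
        (riemannZeta w * (1 - b) / Real.log b)) := by
  have hre := re_eq_zero_of_natCast_cpow_eq_one hb hw
  have hsubre : (w - j).re = -j := by simp [hre]
  have hD : HasResidueAt (digitSumDiffLSeries b) (w - j + j)
      (riemannZeta w * (1 - b) / Real.log b) := by
    rw [sub_add_cancel]
    exact hasResidueAt_digitSumDiffLSeries hb hw
  have htail := (hasGammaMellin_digitSumDiff hb).tail_hasResidueAt hD fun i hij =>
    differentiableAt_digitSumDiffLSeries (by lia) (natCast_cpow_ne_one hb (by
      rw [Complex.add_re, hsubre, Complex.natCast_re, neg_add_eq_sub, sub_ne_zero]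
      exact_mod_cast hij))
  have hne {a : ℝ} (ha : 0 < a) : w - j - a ≠ 0 := fun h => by
    have hre0 := congrArg Complex.re h
    rw [Complex.sub_re, hsubre, Complex.ofReal_re, Complex.zero_re] at hre0
    linarith [j.cast_nonneg (α := ℝ)]
  have hmain : ContinuousAt
      (fun s : ℂ => ((s - 1) * (s - 2))⁻¹ * digitSumDiffLSeries b (s - 2)) (w - j) := by
    refine .mul (.inv₀ (by fun_prop) (mul_ne_zero ?_ ?_))
      (differentiableAt_digitSumDiffLSeries_sub_two hb ?_).continuousAt
    · exact_mod_cast hne one_pos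
    · exact_mod_cast hne two_pos
    · linarith [j.cast_nonneg (α := ℝ)]
  have h := (HasResidueAt.of_continuousAt hmain).add htail
  rw [zero_add, ascPochhammer_eval_sub_natCast] at h
  exact h

lemma mul_digitSumDiffLSeries {s : ℂ} (hs : s ≠ 0) :
    s * digitSumDiffLSeries b s = zetaMulCpowSub b s / dslope (fun z : ℂ => (b : ℂ) ^ z) 0 s := by
  rw [digitSumDiffLSeries, dslope_of_ne _ hs, slope_def_field, Complex.cpow_zero, sub_zero,
    div_div_eq_mul_div, mul_div_assoc', mul_comm s]

lemma hasDerivAt_zetaMulCpowSub_zero (hb : 2 ≤ b) :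
    HasDerivAt (zetaMulCpowSub b)
      (-Real.log (2 * Real.pi) / 2 * (1 - b) - Real.log b / 2) 0 := by
  have hζ := (differentiableAt_riemannZeta zero_ne_one).hasDerivAt
  have hpow := (hasDerivAt_natCast_cpow (by lia : b ≠ 0) 0).sub_const (b : ℂ)
  have hne : ∀ᶠ s in 𝓝 (0 : ℂ), zetaMulCpowSub b s = riemannZeta s * ((b : ℂ) ^ s - b) :=
    (eventually_ne_nhds zero_ne_one).mono fun s => zetaMulCpowSub_of_ne_one
  refine ((hζ.mul hpow).congr_of_eventuallyEq hne).congr_deriv ?_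
  have hlog : (Real.log (2 * Real.pi) : ℂ) = Complex.log (2 * Real.pi) := by
    rw [Complex.ofReal_log (by positivity)]
    push_cast
    rfl
  rw [deriv_riemannZeta_zero, riemannZeta_zero, Complex.cpow_zero, hlog]
  ring

lemma hasDerivAt_dslope_natCast_cpow_zero (hb : b ≠ 0) :
    HasDerivAt (dslope (fun z : ℂ => (b : ℂ) ^ z) 0) ((Real.log b : ℂ) ^ 2 / 2) 0 := by
  have hderiv : deriv (fun z : ℂ => (b : ℂ) ^ z) = fun z => (b : ℂ) ^ z * Real.log b :=
    funext fun z => (hasDerivAt_natCast_cpow hb z).deriv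
  have hf : Differentiable ℂ fun z : ℂ => (b : ℂ) ^ z := fun z =>
    (hasDerivAt_natCast_cpow hb z).differentiableAt
  refine (hasDerivAt_dslope_self (hf.analyticAt 0)).congr_deriv ?_
  rw [hderiv, ((hasDerivAt_natCast_cpow hb 0).mul_const _).deriv, Complex.cpow_zero]
  ring

lemma dslope_natCast_cpow_zero (hb : b ≠ 0) :
    dslope (fun z : ℂ => (b : ℂ) ^ z) 0 0 = Real.log b := by
  rw [dslope_same, (hasDerivAt_natCast_cpow hb 0).deriv, Complex.cpow_zero, one_mul]

lemma hasDerivAt_zetaMulCpowSub_div_dslope_zero (hb : 2 ≤ b) :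
    HasDerivAt (fun s => zetaMulCpowSub b s / dslope (fun z : ℂ => (b : ℂ) ^ z) 0 s)
      ((b - 1) / (2 * Real.log b) * Real.log (2 * Real.pi) - (b + 1) / 4) 0 := by
  have hlog := log_natCast_ne_zero hb
  have hslope := dslope_natCast_cpow_zero (b := b) (by lia)
  refine ((hasDerivAt_zetaMulCpowSub_zero hb).div (hasDerivAt_dslope_natCast_cpow_zero (by lia))
    (hslope ▸ hlog)).congr_deriv ?_
  rw [hslope, zetaMulCpowSub_of_ne_one zero_ne_one, riemannZeta_zero, Complex.cpow_zero]
  field_simp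
  ring

lemma hasDoublePoleAt_cumDigitSumLSeries_two (hb : 2 ≤ b) :
    HasDoublePoleAt (cumDigitSumLSeries b) 2 ((b - 1) / (2 * Real.log b))
      ((b - 1) / (2 * Real.log b) * (Real.log (2 * Real.pi) - 1) - (b + 1) / 4) := by
  set φ : ℂ → ℂ := fun s => zetaMulCpowSub b s / dslope (fun z : ℂ => (b : ℂ) ^ z) 0 s
  set T : ℂ → ℂ := doubleSumTail (expSum (digitSumDiff b)) (digitSumDiffLSeries b) 2
  have hφ0 : φ (2 - 2) = (b - 1) / (2 * Real.log b) := by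
    simp only [φ, sub_self, dslope_natCast_cpow_zero (by lia : b ≠ 0),
      zetaMulCpowSub_of_ne_one zero_ne_one, riemannZeta_zero, Complex.cpow_zero]
    field_simp [log_natCast_ne_zero hb]
    ring
  have hφ : HasDerivAt φ
      ((b - 1) / (2 * Real.log b) * Real.log (2 * Real.pi) - (b + 1) / 4) (2 - 2) := by
    rw [sub_self]
    exact hasDerivAt_zetaMulCpowSub_div_dslope_zero hb
  have hT : DifferentiableAt ℂ T 2 := differentiableAt_doubleSumTail hb fun j _ => by
    rw [Complex.re_ofNat]
    positivity
  have hsub (a : ℂ) : HasDerivAt (fun s : ℂ => s - a) 1 2 := (hasDerivAt_id 2).sub_const a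
  have hg : HasDerivAt (fun s : ℂ => φ (s - 2) / (s - 1) + (s - 2) ^ 2 * T s)
      ((b - 1 : ℂ) / (2 * Real.log b) * (Real.log (2 * Real.pi) - 1) - (b + 1) / 4) 2 := by
    refine (((hφ.comp_sub_const 2 2).div (hsub 1) (by norm_num)).add
      (((hsub 2).pow 2).mul hT.hasDerivAt)).congr_deriv ?_
    rw [hφ0, Pi.pow_apply, sub_self, zero_pow two_ne_zero, Nat.add_one_sub_one, pow_one]
    ring
  convert HasDoublePoleAt.of_hasDerivAt (f := cumDigitSumLSeries b) hg ?_ using 1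
  · rw [hφ0]
    ring
  · filter_upwards [self_mem_nhdsWithin] with s hs
    have hs2 : s - 2 ≠ 0 := sub_ne_zero.2 hs
    rw [show φ (s - 2) = (s - 2) * digitSumDiffLSeries b (s - 2) from
        (mul_digitSumDiffLSeries hs2).symm,
      show cumDigitSumLSeries b s =
        ((s - 1) * (s - 2))⁻¹ * digitSumDiffLSeries b (s - 2) + T s from rfl]
    field_simp

end Poles

section Main

variable {b : ℕ}

lemma differentiableAt_cumDigitSumLSeries_of_notMem (hb : 2 ≤ b) {s : ℂ}
    (hs : s ∉ ({z : ℂ | ∃ m : ℤ, z = 2 + 2 * Real.pi * Complex.I * m / Real.log b} ∪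
      {(1 : ℂ)} ∪
      {z : ℂ | ∃ m : ℤ, ∃ k : ℕ, Even k ∧ 2 ≤ k ∧
        z = 2 - (k : ℂ) + 2 * Real.pi * Complex.I * m / Real.log b})) :
    DifferentiableAt ℂ (cumDigitSumLSeries b) s := by
  simp only [mem_union, mem_singleton_iff, mem_ofPred_eq, not_or, not_exists, not_and] at hs
  obtain ⟨⟨htwo, hone⟩, hneg⟩ := hs
  refine differentiableAt_cumDigitSumLSeries hb hone (fun h => ?_)
    fun j hj h => ?_ <;> obtain ⟨m, hm⟩ := (natCast_cpow_eq_one_iff hb).1 h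
  · exact htwo m (by linear_combination hm)
  · refine hneg m (j + 2) (hj.add even_two) (by lia) ?_
    rw [Nat.cast_add, Nat.cast_two]
    linear_combination hm

lemma hasResidueAt_cumDigitSumLSeries_two_add_period (hb : 2 ≤ b) {m : ℤ} (hm : m ≠ 0) :
    HasResidueAt (cumDigitSumLSeries b) (2 + 2 * Real.pi * Complex.I * m / Real.log b)
      (-((b - 1) / (2 * Real.pi * Complex.I * m)) *
        (1 + 2 * Real.pi * Complex.I * m / Real.log b)⁻¹ *
        riemannZeta (2 * Real.pi * Complex.I * m / Real.log b)) := by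
  have hlog := log_natCast_ne_zero hb
  have hperiod : 2 * Real.pi * Complex.I * (m : ℂ) ≠ 0 :=
    mul_ne_zero (mod_cast Complex.two_pi_I_ne_zero) (mod_cast hm)
  convert hasResidueAt_cumDigitSumLSeries_two_add hb ((natCast_cpow_eq_one_iff hb).2 ⟨m, rfl⟩)
    (div_ne_zero hperiod hlog) using 1
  rw [mul_inv, inv_div]
  field_simp
  ring

lemma hasResidueAt_cumDigitSumLSeries_two_sub_add_period (hb : 2 ≤ b) (m : ℤ) {k : ℕ} (hk : 2 ≤ k) :
    HasResidueAt (cumDigitSumLSeries b)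
      (2 - (k : ℂ) + 2 * Real.pi * Complex.I * m / Real.log b)
      ((b - 1) / Real.log b * riemannZeta (2 * Real.pi * Complex.I * m / Real.log b) *
        (bernoulli k / (k * (k - 2).factorial)) *
        ∏ j ∈ Finset.Icc 1 (k - 2), (2 * Real.pi * Complex.I * m / Real.log b - j)) := by
  obtain ⟨j, rfl⟩ := Nat.exists_eq_add_of_le' hk
  convert hasResidueAt_cumDigitSumLSeries_sub_natCast hb
    ((natCast_cpow_eq_one_iff hb).2 ⟨m, rfl⟩) j using 1
  · push_cast
    ring
  · rw [kernelCoeff, Nat.add_sub_cancel]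
    push_cast
    ring

end Main

theorem Gb_meromorphic_continuation (b : ℕ) (hb : 2 ≤ b) :
    ∃ G : ℂ → ℂ,
      -- (i) analytic off the set of possible poles
      (∀ s : ℂ,
        s ∉ ({z : ℂ | ∃ m : ℤ, z = 2 + 2 * Real.pi * Complex.I * m / Real.log b} ∪
             {(1 : ℂ)} ∪
             {z : ℂ | ∃ m : ℤ, ∃ k : ℕ, Even k ∧ 2 ≤ k ∧
               z = 2 - (k : ℂ) + 2 * Real.pi * Complex.I * m / Real.log b}) →
        DifferentiableAt ℂ G s) ∧
      -- (ii) agrees with the Dirichlet series for Re(s) > 2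
      (∀ s : ℂ, 2 < s.re →
        G s = ∑' n : ℕ, (cumDigitSum b (n + 1) : ℂ) * ((n + 1 : ℕ) : ℂ) ^ (-s)) ∧
      -- (iii) double pole at s = 2 with the stated Laurent expansion
      (Filter.Tendsto (fun s : ℂ => (s - 2) ^ 2 * G s) (𝓝[≠] (2 : ℂ))
        (𝓝 (((b : ℂ) - 1) / (2 * Real.log b))) ∧
       Filter.Tendsto
        (fun s : ℂ => ((s - 2) ^ 2 * G s - ((b : ℂ) - 1) / (2 * Real.log b)) / (s - 2))
        (𝓝[≠] (2 : ℂ))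
        (𝓝 ((((b : ℂ) - 1) / (2 * Real.log b)) * (Real.log (2 * Real.pi) - 1)
            - ((b : ℂ) + 1) / 4))) ∧
      -- (iv) simple pole at s = 1 with residue (b+1)/12
      (Filter.Tendsto (fun s : ℂ => (s - 1) * G s) (𝓝[≠] (1 : ℂ))
        (𝓝 (((b : ℂ) + 1) / 12))) ∧
      -- (v) simple poles at s = 2 + 2πim/log b, m ≠ 0
      (∀ m : ℤ, m ≠ 0 →
        Filter.Tendsto
          (fun s : ℂ => (s - (2 + 2 * Real.pi * Complex.I * m / Real.log b)) * G s)
          (𝓝[≠] (2 + 2 * Real.pi * Complex.I * m / Real.log b))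
          (𝓝 (-(((b : ℂ) - 1) / (2 * Real.pi * Complex.I * m)) *
            (1 + 2 * Real.pi * Complex.I * m / Real.log b)⁻¹ *
            riemannZeta (2 * Real.pi * Complex.I * m / Real.log b)))) ∧
      -- (vi) simple poles at s = 2 - k + 2πim/log b, k even ≥ 2
      (∀ m : ℤ, ∀ k : ℕ, Even k → 2 ≤ k →
        Filter.Tendsto
          (fun s : ℂ =>
            (s - (2 - (k : ℂ) + 2 * Real.pi * Complex.I * m / Real.log b)) * G s)
          (𝓝[≠] (2 - (k : ℂ) + 2 * Real.pi * Complex.I * m / Real.log b))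
          (𝓝 ((((b : ℂ) - 1) / Real.log b) *
            riemannZeta (2 * Real.pi * Complex.I * m / Real.log b) *
            ((bernoulli k : ℂ) / ((k : ℂ) * (Nat.factorial (k - 2) : ℂ))) *
            ∏ j ∈ Finset.Icc 1 (k - 2),
              (2 * Real.pi * Complex.I * m / Real.log b - (j : ℂ))))) := by
  exact ⟨cumDigitSumLSeries b,
    fun s => differentiableAt_cumDigitSumLSeries_of_notMem hb,
    fun s hs => (cumDigitSumLSeries_eq_LSeries hb hs).trans (LSeries_cumDigitSum_eq_tsum hb hs),
    hasDoublePoleAt_cumDigitSumLSeries_two hb,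
    hasResidueAt_cumDigitSumLSeries_one hb,
    fun m => hasResidueAt_cumDigitSumLSeries_two_add_period hb,
    fun m k _ => hasResidueAt_cumDigitSumLSeries_two_sub_add_period hb m⟩
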